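/- Let N > 0, let L ≥ 2 be an integer, let K > 0 and g > √(nN), and let C₀ ⊆ [−K, K]^n be a finite set such that every L-element subset of C₀ has Chebyshev radius strictly greater than √(nN). Then the periodic set C := { c + 2(K+g)·v : c ∈ C₀, v ∈ ℤⁿ } has the property that every set of L pairwise distinct points of C has Chebyshev radius strictly greater than √(nN); equivalently, C is an (N, L−1)-multiple packing. -/

import Mathlib

/-!
Write `L` distinct points of `C₀ + 2(K+g)ℤⁿ` as `cᵢ + tᵢ`. If all `tᵢ` agree, the points form a
translate of `L` distinct points of `C₀`, and the Chebyshev radius is translation invariant. If two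
of the `tᵢ` differ, those two points differ by at least `2(K+g) - 2K = 2g` in some coordinate, and
the Chebyshev radius is at least half of any pairwise distance.
-/

open Function Metric Set
open scoped ENNReal Pointwise

section ChebyshevRadius

variable {κ X Y : Type*} [PseudoMetricSpace X] [PseudoMetricSpace Y]

/-- The Chebyshev radius of a family of points: the infimum of the radii of closed balls containing
it. The real supremum is `0` for an unbounded or empty family. -/
noncomputable def chebyshevRadius (x : κ → X) : ℝ :=
  ⨅ y, ⨆ i, dist (x i) y

theorem chebyshevRadius_le_iSup_dist (x : κ → X) (y : X) :
    chebyshevRadius x ≤ ⨆ i, dist (x i) y :=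
  ciInf_le ⟨0, by rintro _ ⟨z, rfl⟩; exact Real.iSup_nonneg fun _ ↦ dist_nonneg⟩ y

theorem dist_le_two_mul_chebyshevRadius [Finite κ] (x : κ → X) (i j : κ) :
    dist (x i) (x j) ≤ 2 * chebyshevRadius x := by
  have : Nonempty X := ⟨x i⟩
  suffices dist (x i) (x j) / 2 ≤ chebyshevRadius x by linarith
  refine le_ciInf fun y ↦ ?_
  have dist_le (k : κ) : dist (x k) y ≤ ⨆ l, dist (x l) y :=
    le_ciSup (f := fun l ↦ dist (x l) y) (finite_range _).bddAbove k
  linarith [dist_triangle_right (x i) (x j) y, dist_le i, dist_le j]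

theorem chebyshevRadius_isometryEquiv_comp (e : X ≃ᵢ Y) (x : κ → X) :
    chebyshevRadius (e ∘ x) = chebyshevRadius x :=
  (e.toEquiv.iInf_congr fun y ↦ by simp [e.dist_eq]).symm

end ChebyshevRadius

section MultiplePacking

variable {κ X : Type*} [PseudoMetricSpace X] {r : ℝ} {C : Set X}

/-- Any `κ`-indexed family of distinct points of `C` has Chebyshev radius greater than `r`. -/
def ChebyshevSeparated (κ : Type*) (r : ℝ) (C : Set X) : Prop :=
  ∀ x : κ → X, Injective x → (∀ i, x i ∈ C) → r < chebyshevRadius x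

/-- Multiple packing: no point lies in more than `m` of the closed balls of radius `r` centred at
points of `C`. The `(N, L - 1)`-multiple packings of `ℝⁿ` are the case `r = √(nN)`, `m = L - 1`. -/
def IsMultiplePacking (r : ℝ) (m : ℕ∞) (C : Set X) : Prop :=
  ∀ y, {p ∈ C | y ∈ closedBall p r}.encard ≤ m

theorem chebyshevRadius_le_of_forall_mem_closedBall [Nonempty κ] {x : κ → X} {y : X}
    (h : ∀ i, y ∈ closedBall (x i) r) : chebyshevRadius x ≤ r :=
  (chebyshevRadius_le_iSup_dist x y).trans (ciSup_le fun i ↦ mem_closedBall'.mp (h i))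

theorem exists_injective_fin_of_le_encard {α : Type*} {s : Set α} {k : ℕ} (h : k ≤ s.encard) :
    ∃ x : Fin k → α, Injective x ∧ ∀ i, x i ∈ s := by
  obtain ⟨t, hts, ht⟩ := exists_subset_encard_eq h
  have := (finite_of_encard_eq_coe ht).to_subtype
  have hcard : Nat.card t = k := by rw [Nat.card_coe_set_eq, ncard, ht, ENat.toNat_natCast]
  let e := (Finite.equivFinOfCardEq hcard).symm
  exact ⟨fun i ↦ e i, Subtype.val_injective.comp e.injective, fun i ↦ hts (e i).2⟩

theorem ChebyshevSeparated.isMultiplePacking {L : ℕ} [NeZero L]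
    (hC : ChebyshevSeparated (Fin L) r C) : IsMultiplePacking r (L - 1) C := by
  intro y
  refine ENat.le_sub_one_of_lt (lt_of_not_ge fun hle ↦ ?_)
  obtain ⟨x, hx, hxy⟩ := exists_injective_fin_of_le_encard hle
  exact (hC x hx fun i ↦ (hxy i).1).not_ge
    (chebyshevRadius_le_of_forall_mem_closedBall fun i ↦ (hxy i).2)

theorem ChebyshevSeparated.add [Finite κ] [Nonempty κ] {E : Type*} [SeminormedAddCommGroup E]
    {C T : Set E} (hC : ChebyshevSeparated κ r C)
    (hsep : ∀ c ∈ C, ∀ c' ∈ C, ∀ t ∈ T, ∀ t' ∈ T, t ≠ t' → 2 * r < dist (c + t) (c' + t')) :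
    ChebyshevSeparated κ r (C + T) := by
  intro x hx hmem
  choose c hc t ht hct using fun i ↦ mem_add.mp (hmem i)
  by_cases hconst : ∀ i j, t i = t j
  · let i₀ := Classical.arbitrary κ
    have hx_eq : x = IsometryEquiv.addRight (t i₀) ∘ c := by
      funext i
      rw [comp_apply, IsometryEquiv.addRight_apply, ← hct i, hconst i i₀]
    have hc_inj : Injective c := Injective.of_comp (hx_eq ▸ hx)
    rw [hx_eq, chebyshevRadius_isometryEquiv_comp]
    exact hC c hc_inj hc
  · push Not at hconst
    obtain ⟨i, j, hij⟩ := hconst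
    have hfar := hsep _ (hc i) _ (hc j) _ (ht i) _ (ht j) hij
    rw [hct, hct] at hfar
    linarith [dist_le_two_mul_chebyshevRadius x i j]

end MultiplePacking

section ScaledIntegerLattice

variable {ι : Type*} {p : ℝ≥0∞} {a r K g : ℝ} {C : Set (PiLp p fun _ : ι ↦ ℝ)}

/-- The lattice `a ℤ^ι` in `ℝ^ι` with the `ℓ^p` norm. -/
def scaledIntegerLattice (ι : Type*) (p : ℝ≥0∞) (a : ℝ) : Set (PiLp p fun _ : ι ↦ ℝ) :=
  range fun v : ι → ℤ ↦ WithLp.toLp p fun j ↦ a * (v j : ℝ)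

theorem mem_add_scaledIntegerLattice {x : PiLp p fun _ : ι ↦ ℝ} :
    x ∈ C + scaledIntegerLattice ι p a ↔
      ∃ c ∈ C, ∃ v : ι → ℤ, ∀ j, x j = c j + a * (v j : ℝ) := by
  simp only [scaledIntegerLattice, mem_add, exists_range_iff, PiLp.ext_iff, PiLp.add_apply,
    eq_comm]

theorem two_mul_le_dist_add_intCast_mul {s t : ℝ} (hs : s ∈ Icc (-K) K) (ht : t ∈ Icc (-K) K)
    {m k : ℤ} (hmk : m ≠ k) :
    2 * g ≤ dist (s + 2 * (K + g) * m) (t + 2 * (K + g) * k) := by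
  have hst : |s - t| ≤ 2 * K := (Real.dist_le_of_mem_Icc hs ht).trans_eq (by ring)
  have hone : (1 : ℝ) ≤ |(m : ℝ) - k| := by
    exact_mod_cast Int.one_le_abs (sub_ne_zero.mpr hmk)
  calc
    2 * g ≤ |2 * (K + g)| - |s - t| := by linarith [le_abs_self (2 * (K + g))]
    _ ≤ |2 * (K + g)| * |(m : ℝ) - k| - |s - t| := by
      gcongr
      exact le_mul_of_one_le_right (abs_nonneg _) hone
    _ = |2 * (K + g) * (m - k)| - |-(s - t)| := by rw [abs_mul _ ((m : ℝ) - k), abs_neg]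
    _ ≤ |2 * (K + g) * (m - k) - -(s - t)| := abs_sub_abs_le_abs_sub _ _
    _ = dist (s + 2 * (K + g) * m) (t + 2 * (K + g) * k) := by
      rw [Real.dist_eq]
      ring_nf

variable [Fintype ι] [Fact (1 ≤ p)]

theorem two_mul_le_dist_add_of_mem_scaledIntegerLattice
    {c c' t t' : PiLp p fun _ : ι ↦ ℝ} (hc : ∀ j, c j ∈ Icc (-K) K) (hc' : ∀ j, c' j ∈ Icc (-K) K)
    (ht : t ∈ scaledIntegerLattice ι p (2 * (K + g)))
    (ht' : t' ∈ scaledIntegerLattice ι p (2 * (K + g))) (hne : t ≠ t') :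
    2 * g ≤ dist (c + t) (c' + t') := by
  obtain ⟨v, rfl⟩ := ht
  obtain ⟨w, rfl⟩ := ht'
  obtain ⟨j, hj⟩ : ∃ j, v j ≠ w j := ne_iff.mp fun hvw ↦ hne (by rw [hvw])
  refine le_trans ?_ (PiLp.dist_apply_le _ _ j)
  exact two_mul_le_dist_add_intCast_mul (hc j) (hc' j) hj

theorem tiling_preserves_multiple_packing_general {L : ℕ} [NeZero L] (hg : r < g)
    (hcube : ∀ c ∈ C, ∀ j, c j ∈ Icc (-K) K) (hC : ChebyshevSeparated (Fin L) r C) :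
    ChebyshevSeparated (Fin L) r (C + scaledIntegerLattice ι p (2 * (K + g))) ∧
      IsMultiplePacking r (L - 1) (C + scaledIntegerLattice ι p (2 * (K + g))) := by
  have htiling : ChebyshevSeparated (Fin L) r (C + scaledIntegerLattice ι p (2 * (K + g))) :=
    hC.add fun c hc c' hc' t ht t' ht' hne ↦
      (mul_lt_mul_of_pos_left hg two_pos).trans_le <|
        two_mul_le_dist_add_of_mem_scaledIntegerLattice (hcube c hc) (hcube c' hc') ht ht' hne
  exact ⟨htiling, htiling.isMultiplePacking⟩

end ScaledIntegerLattice

/-- If every `L`-element subset of a finite set `C₀ ⊆ [-K, K]^n` has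
Chebyshev radius `rad = ⨅ y, ⨆ i, ‖x i - y‖` greater than `√(nN)`, and `g > √(nN)`,
then the periodic set `C = C₀ + 2(K+g)·ℤⁿ` also has the property that every `L`
pairwise distinct points of it have Chebyshev radius greater than `√(nN)`;
equivalently, `C` is an `(N, L-1)`-multiple packing. -/
theorem tiling_preserves_multiple_packing (n L : ℕ) (hL : 2 ≤ L) (N K g : ℝ)
    (hN : 0 < N) (hK : 0 < K) (hg : Real.sqrt (n * N) < g)
    (C₀ : Finset (EuclideanSpace ℝ (Fin n)))
    (hC₀sub : ∀ c ∈ C₀, ∀ j, c j ∈ Set.Icc (-K) K)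
    (hC₀rad : ∀ x : Fin L → EuclideanSpace ℝ (Fin n), Function.Injective x →
      (∀ i, x i ∈ C₀) →
      Real.sqrt (n * N) < ⨅ y : EuclideanSpace ℝ (Fin n), ⨆ i, ‖x i - y‖) :
    (∀ x : Fin L → EuclideanSpace ℝ (Fin n), Function.Injective x →
      (∀ i, ∃ c ∈ C₀, ∃ v : Fin n → ℤ, ∀ j, x i j = c j + 2 * (K + g) * (v j : ℝ)) →
      Real.sqrt (n * N) < ⨅ y : EuclideanSpace ℝ (Fin n), ⨆ i, ‖x i - y‖) ∧
    (∀ y : EuclideanSpace ℝ (Fin n),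
      {p : EuclideanSpace ℝ (Fin n) |
          (∃ c ∈ C₀, ∃ v : Fin n → ℤ, ∀ j, p j = c j + 2 * (K + g) * (v j : ℝ)) ∧
          y ∈ Metric.closedBall p (Real.sqrt (n * N))}.encard ≤ (L : ℕ∞) - 1) := by
  have : NeZero L := ⟨by omega⟩
  have hC₀ : ChebyshevSeparated (Fin L) √(n * N) (C₀ : Set (PiLp 2 fun _ : Fin n ↦ ℝ)) := by
    simpa only [ChebyshevSeparated, chebyshevRadius, dist_eq_norm, Finset.mem_coe] using hC₀rad
  simpa only [ChebyshevSeparated, IsMultiplePacking, chebyshevRadius, mem_add_scaledIntegerLattice,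
    dist_eq_norm, Finset.mem_coe] using tiling_preserves_multiple_packing_general hg hC₀sub hC₀
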